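/- Suppose A is Schur (every eigenvalue of A has modulus strictly less than 1), the initial state x0 is known and fixed, and the attacker can manipulate at most q attack elements simultaneously. Then every persistent attack a with ‖a‖_0 ≤ q is asymptotically identifiable (i.e., asymptotically i-identifiable for every i ∈ {1,…,m}) if and only if 2q < min_i α_i. -/

import Mathlib

open Filter

noncomputable section

/-- State trajectory of `x(k+1) = A x(k) + B_d d(k) + B_a a(k)` with `x(0) = x0`. -/
def traj {n o m : ℕ} (A : Matrix (Fin n) (Fin n) ℂ) (Bd : Matrix (Fin n) (Fin o) ℂ)
    (Ba : Matrix (Fin n) (Fin m) ℂ) (a : ℕ → Fin m → ℂ) (d : ℕ → Fin o → ℂ)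
    (x0 : Fin n → ℂ) : ℕ → Fin n → ℂ
  | 0 => x0
  | k + 1 => A.mulVec (traj A Bd Ba a d x0 k) + Bd.mulVec (d k) + Ba.mulVec (a k)

/-- Output `y(a,d,x0)(k) = C x(k) + D_d d(k) + D_a a(k)`. -/
def output {n o m p : ℕ} (A : Matrix (Fin n) (Fin n) ℂ) (Bd : Matrix (Fin n) (Fin o) ℂ)
    (Ba : Matrix (Fin n) (Fin m) ℂ) (C : Matrix (Fin p) (Fin n) ℂ)
    (Dd : Matrix (Fin p) (Fin o) ℂ) (Da : Matrix (Fin p) (Fin m) ℂ)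
    (a : ℕ → Fin m → ℂ) (d : ℕ → Fin o → ℂ) (x0 : Fin n → ℂ) (k : ℕ) : Fin p → ℂ :=
  C.mulVec (traj A Bd Ba a d x0 k) + Dd.mulVec (d k) + Da.mulVec (a k)

/-- `‖a‖₀`: the number of component signals of `a` that are not identically zero. -/
def sparsity {m : ℕ} (a : ℕ → Fin m → ℂ) : ℕ := {j : Fin m | ∃ k, a k j ≠ 0}.ncard

/-- A persistent attack does not converge to `0`. -/
def Persistent {m : ℕ} (a : ℕ → Fin m → ℂ) : Prop := ¬ Tendsto a atTop (nhds 0)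

/-- Undetectable: some disturbance and initial state give identically zero output. -/
def Undetectable {n o m p : ℕ} (A : Matrix (Fin n) (Fin n) ℂ) (Bd : Matrix (Fin n) (Fin o) ℂ)
    (Ba : Matrix (Fin n) (Fin m) ℂ) (C : Matrix (Fin p) (Fin n) ℂ)
    (Dd : Matrix (Fin p) (Fin o) ℂ) (Da : Matrix (Fin p) (Fin m) ℂ)
    (a : ℕ → Fin m → ℂ) : Prop :=
  ∃ d x0, ∀ k, output A Bd Ba C Dd Da a d x0 k = 0

/-- Security index `α_i`: minimal `‖a‖₀` over persistent undetectable attacks whose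
`i`-th component signal is not identically zero (`⊤` if none exists). -/
def secIndex {n o m p : ℕ} (A : Matrix (Fin n) (Fin n) ℂ) (Bd : Matrix (Fin n) (Fin o) ℂ)
    (Ba : Matrix (Fin n) (Fin m) ℂ) (C : Matrix (Fin p) (Fin n) ℂ)
    (Dd : Matrix (Fin p) (Fin o) ℂ) (Da : Matrix (Fin p) (Fin m) ℂ) (i : Fin m) : ℕ∞ :=
  sInf {c : ℕ∞ | ∃ a : ℕ → Fin m → ℂ, Persistent a ∧ Undetectable A Bd Ba C Dd Da a ∧
    (∃ k, a k i ≠ 0) ∧ c = (sparsity a : ℕ∞)}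

variable {n o m p : ℕ} (A : Matrix (Fin n) (Fin n) ℂ) (Bd : Matrix (Fin n) (Fin o) ℂ)
  (Ba : Matrix (Fin n) (Fin m) ℂ) (C : Matrix (Fin p) (Fin n) ℂ)
  (Dd : Matrix (Fin p) (Fin o) ℂ) (Da : Matrix (Fin p) (Fin m) ℂ)

/-! An attack whose output vanishes asymptotically can be replaced by an undetectable one. Let `v`
be a scalar signal that does not converge to zero and `σ` the shift. A recurrence with stable
characteristic polynomial forces decay, so every polynomial `P` for which `P(σ) v` converges to zero
has a root outside the open unit disc; these polynomials form an ideal, so they share such a root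
`z`. Hence `P(σ) v ↦ P(z)` is well defined modulo null sequences and extends to a functional `φ`
that kills them. The map `u ↦ (k ↦ φ(σᵏ u))` is linear, commutes with the shift, kills null
sequences and sends `v` to `(zᵏ)`. Applied to every component of attack, disturbance, state and
output, it preserves the system equations and the zero components of the attack.

Two attacks of sparsity at most `q` that cannot be told apart thus yield a persistent undetectable
attack of sparsity at most `2q`. Conversely, such an attack is a difference of two attacks of
sparsity at most `q`; the initial state that makes it undetectable need not be zero, but its
contribution to the output decays because `A` is Schur. -/

open scoped Topology

section Shift

open Polynomial

section

variable (R M : Type*) [Semiring R] [AddCommMonoid M] [Module R M]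

/-- The left shift `σ` on signals, as a linear map, so that `P(σ) v` is `aeval (shift R M) P v`. -/
def shift : Module.End R (ℕ → M) := LinearMap.funLeft R M Nat.succ

variable {R M}

@[simp]
lemma shift_apply (v : ℕ → M) (k : ℕ) : shift R M v k = v (k + 1) := rfl

end

lemma aeval_shift_orbit {R M : Type*} [CommSemiring R] [AddCommMonoid M] [Module R M]
    (T : Module.End R M) (x : M) (P : R[X]) :
    aeval (shift R M) P (fun k ↦ (T ^ k) x) = fun k ↦ (T ^ k) (aeval T P x) := by
  induction P using Polynomial.induction_on with
  | C c => ext k; simp [Module.algebraMap_end_apply]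
  | add P Q hP hQ => ext k; simp [hP, hQ]
  | monomial n c ih =>
    rw [pow_succ', mul_left_comm, map_mul, Module.End.mul_apply, ih]
    ext k
    simp [pow_succ]

lemma tendsto_zero_of_le_mul_add {u e : ℕ → ℝ} {r : ℝ} (hu : ∀ k, 0 ≤ u k) (hr0 : 0 ≤ r)
    (hr1 : r < 1) (hue : ∀ k, u (k + 1) ≤ r * u k + e k) (he : Tendsto e atTop (𝓝 0)) :
    Tendsto u atTop (𝓝 0) := by
  rw [tendsto_order]
  refine ⟨fun b hb ↦ .of_forall fun k ↦ hb.trans_le (hu k), fun ε hε ↦ ?_⟩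
  obtain ⟨N, hN⟩ : ∃ N, ∀ k ≥ N, e k < (1 - r) * (ε / 2) :=
    eventually_atTop.1 (he.eventually_lt_const (mul_pos (sub_pos.2 hr1) (half_pos hε)))
  have geom_bound (j : ℕ) : u (j + N) - ε / 2 ≤ r ^ j * (u (0 + N) - ε / 2) :=
    le_geom (u := fun j ↦ u (j + N) - ε / 2) hr0 j fun k _ ↦ by
      rw [show k + 1 + N = k + N + 1 by lia]
      linarith [hue (k + N), hN (k + N) (by lia)]
  have geom_lim : Tendsto (fun j ↦ r ^ j * (u (0 + N) - ε / 2)) atTop (𝓝 0) := by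
    simpa only [zero_mul] using
      (tendsto_pow_atTop_nhds_zero_of_lt_one hr0 hr1).mul_const (u (0 + N) - ε / 2)
  rw [← map_add_atTop_eq_nat N, eventually_map]
  filter_upwards [geom_lim.eventually_lt_const (half_pos hε)] with j hj
  linarith [geom_bound j]

variable {𝕜 E : Type*} [NormedField 𝕜] [SeminormedAddCommGroup E] [NormedSpace 𝕜 E]

lemma tendsto_zero_of_tendsto_shift_sub_smul {r : 𝕜} (hr : ‖r‖ < 1) {v : ℕ → E}
    (h : Tendsto (shift 𝕜 E v - r • v) atTop (𝓝 0)) : Tendsto v atTop (𝓝 0) := by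
  rw [tendsto_zero_iff_norm_tendsto_zero] at h ⊢
  refine tendsto_zero_of_le_mul_add (fun k ↦ norm_nonneg _) (norm_nonneg r) hr (fun k ↦ ?_) h
  calc ‖v (k + 1)‖ = ‖r • v k + (v (k + 1) - r • v k)‖ := by rw [add_sub_cancel]
    _ ≤ ‖r • v k‖ + ‖v (k + 1) - r • v k‖ := norm_add_le _ _
    _ = ‖r‖ * ‖v k‖ + ‖v (k + 1) - r • v k‖ := by rw [norm_smul]

lemma tendsto_zero_of_tendsto_aeval_shift_prod_X_sub_C {s : Multiset 𝕜} (hs : ∀ r ∈ s, ‖r‖ < 1)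
    {v : ℕ → E}
    (h : Tendsto (aeval (shift 𝕜 E) (s.map (X - Polynomial.C ·)).prod v) atTop (𝓝 0)) :
    Tendsto v atTop (𝓝 0) := by
  induction s using Multiset.induction_on with
  | empty => simpa using h
  | cons r s ih =>
    rw [Multiset.forall_mem_cons] at hs
    refine ih hs.2 (tendsto_zero_of_tendsto_shift_sub_smul hs.1 ?_)
    simpa [sub_mul] using! h

lemma tendsto_zero_of_tendsto_aeval_shift {P : 𝕜[X]} (hP : P ≠ 0) (hsplits : P.Splits)
    (hroots : ∀ z, P.IsRoot z → ‖z‖ < 1) {v : ℕ → E}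
    (h : Tendsto (aeval (shift 𝕜 E) P v) atTop (𝓝 0)) : Tendsto v atTop (𝓝 0) := by
  refine tendsto_zero_of_tendsto_aeval_shift_prod_X_sub_C (s := P.roots)
    (fun r hr ↦ hroots r (isRoot_of_mem_roots hr)) ?_
  rw [hsplits.eq_prod_roots, map_mul, aeval_C] at h
  have hc : P.leadingCoeff ≠ 0 := leadingCoeff_ne_zero.2 hP
  simpa [hc] using! h.const_smul P.leadingCoeff⁻¹

lemma tendsto_pow_apply_of_forall_mem_spectrum [IsAlgClosed 𝕜] [FiniteDimensional 𝕜 E]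
    {T : Module.End 𝕜 E} (hT : ∀ z ∈ spectrum 𝕜 T, ‖z‖ < 1) (x : E) :
    Tendsto (fun k ↦ (T ^ k) x) atTop (𝓝 0) := by
  refine tendsto_zero_of_tendsto_aeval_shift T.charpoly_monic.ne_zero (IsAlgClosed.splits _)
    (fun z hz ↦ hT z ?_) ?_
  · exact ((Module.End.hasEigenvalue_iff_isRoot_charpoly T z).2 hz).mem_spectrum
  · rw [aeval_shift_orbit, T.aeval_self_charpoly]
    simpa only [LinearMap.zero_apply, map_zero] using tendsto_const_nhds

end Shift

section CommonRoot

open Polynomial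

variable {K : Type*} [Field K]

lemma exists_common_root (I : Ideal K[X]) {s : Set K}
    (h : ∀ P ∈ I, ∃ z ∈ s, P.IsRoot z) : ∃ z ∈ s, ∀ P ∈ I, P.IsRoot z := by
  obtain ⟨z, hz, hroot⟩ := h _ (Submodule.IsPrincipal.generator_mem I)
  exact ⟨z, hz, fun P hP ↦ hroot.dvd ((Submodule.IsPrincipal.mem_iff_generator_dvd I).1 hP)⟩

lemma exists_dual_apply_aeval_eq_eval {V : Type*} [AddCommGroup V] [Module K V]
    {T : Module.End K V} {W : Submodule K V} (hW : W ∈ T.invtSubmodule) {v : V} {s : Set K}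
    (h : ∀ P : K[X], aeval T P v ∈ W → ∃ z ∈ s, P.IsRoot z) :
    ∃ z ∈ s, ∃ φ : Module.Dual K V,
      W ≤ LinearMap.ker φ ∧ ∀ P : K[X], φ (aeval T P v) = P.eval z := by
  let I : Ideal K[X] := (Module.AEval.mapSubmodule K V T ⟨W, hW⟩).comap
    (LinearMap.toSpanSingleton K[X] _ (Module.AEval'.of T v))
  have mem_I (P : K[X]) : P ∈ I ↔ aeval T P v ∈ W := by
    simp [I]
  obtain ⟨z, hz, hroot⟩ := exists_common_root I (s := s) fun P hP ↦ h P ((mem_I P).1 hP)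
  let orbit : K[X] →ₗ[K] V ⧸ W := W.mkQ ∘ₗ (LinearMap.applyₗ v) ∘ₗ (aeval T).toLinearMap
  have eval_factors : leval z ∈ LinearMap.range orbit.dualMap := by
    rw [LinearMap.range_dualMap_eq_dualAnnihilator_ker, Submodule.mem_dualAnnihilator]
    intro P hP
    exact hroot P ((mem_I P).2 (by simpa [orbit] using hP))
  obtain ⟨ψ, hψ⟩ := eval_factors
  refine ⟨z, hz, ψ ∘ₗ W.mkQ, fun w hw ↦ ?_, fun P ↦ LinearMap.congr_fun hψ P⟩
  simp [(Submodule.Quotient.mk_eq_zero W).2 hw]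

lemma exists_commute_shift_forall_eq_zero {𝕜 : Type*} [NormedField 𝕜] [IsAlgClosed 𝕜]
    {v : ℕ → 𝕜} (hv : ¬ Tendsto v atTop (𝓝 0)) :
    ∃ Φ : Module.End 𝕜 (ℕ → 𝕜), Commute Φ (shift 𝕜 𝕜) ∧
      (∀ u, Tendsto u atTop (𝓝 0) → Φ u = 0) ∧ ¬ Tendsto (Φ v) atTop (𝓝 0) := by
  let c₀ : Submodule 𝕜 (ℕ → 𝕜) := zeroAtFilterSubmodule 𝕜 atTop
  have c₀_invt : c₀ ∈ (shift 𝕜 𝕜).invtSubmodule := fun u hu ↦ (tendsto_add_atTop_iff_nat 1).2 hu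
  have exists_unstable_root (P : 𝕜[X]) (hP : aeval (shift 𝕜 𝕜) P v ∈ c₀) :
      ∃ z ∈ {z : 𝕜 | 1 ≤ ‖z‖}, P.IsRoot z := by
    by_contra! hstable
    have hP0 : P ≠ 0 := by
      rintro rfl
      exact hstable 1 (by simp) (by simp)
    exact hv (tendsto_zero_of_tendsto_aeval_shift hP0 (IsAlgClosed.splits P)
      (fun z hz ↦ not_le.1 fun h ↦ hstable z h hz) hP)
  obtain ⟨z, hz, φ, hφ, hφv⟩ := exists_dual_apply_aeval_eq_eval c₀_invt exists_unstable_root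
  refine ⟨LinearMap.pi fun k ↦ φ ∘ₗ shift 𝕜 𝕜 ^ k, ?_, fun u hu ↦ ?_, ?_⟩
  · ext u k
    simp [pow_succ]
  · ext k
    exact hφ (c₀.le_comap_pow_of_le_comap c₀_invt k hu)
  · have geom : (LinearMap.pi fun k ↦ φ ∘ₗ shift 𝕜 𝕜 ^ k) v = fun k ↦ z ^ k := by
      ext k
      simpa using hφv (X ^ k)
    rw [geom, tendsto_pow_atTop_nhds_zero_iff_norm_lt_one]
    exact not_lt.2 hz

end CommonRoot

section Sparsity

lemma exists_subsuperset_ncard_le_ncard_sdiff_le {α : Type*} {r t : Set α} {q q' : ℕ} (hrt : r ⊆ t)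
    (hrq : r.ncard ≤ q) (ht : t.ncard ≤ q + q') (hfin : t.Finite) :
    ∃ s, r ⊆ s ∧ s ⊆ t ∧ s.ncard ≤ q ∧ (t \ s).ncard ≤ q' := by
  obtain ⟨s, hrs, hst, hs⟩ := Set.exists_subsuperset_card_eq hrt
    (le_min hrq (Set.ncard_le_ncard hrt hfin)) (min_le_right q t.ncard)
  have ncard_add := Set.ncard_sdiff_add_ncard_of_subset hst hfin
  exact ⟨s, hrs, hst, by lia, by lia⟩

lemma persistent_iff_exists {a : ℕ → Fin m → ℂ} :
    Persistent a ↔ ∃ i, ¬ Tendsto (fun k ↦ a k i) atTop (𝓝 0) := by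
  rw [Persistent, tendsto_pi_nhds, not_forall]
  rfl

lemma exists_ne_zero_of_not_tendsto {α M : Type*} [Zero M] [TopologicalSpace M]
    {l : Filter α} {v : α → M} (hv : ¬ Tendsto v l (𝓝 0)) : ∃ k, v k ≠ 0 := by
  by_contra! h
  exact hv (tendsto_const_nhds.congr fun k ↦ (h k).symm)

lemma sparsity_le_ncard {a : ℕ → Fin m → ℂ} {s : Set (Fin m)}
    (h : ∀ j, (∃ k, a k j ≠ 0) → j ∈ s) : sparsity a ≤ s.ncard :=
  Set.ncard_le_ncard h

lemma sparsity_sub_le (a a' : ℕ → Fin m → ℂ) : sparsity (a' - a) ≤ sparsity a' + sparsity a := by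
  refine (sparsity_le_ncard fun j ⟨k, hk⟩ ↦ ?_).trans (Set.ncard_union_le _ _)
  by_contra! hj
  obtain ⟨ha', ha⟩ : (∀ k, a' k j = 0) ∧ ∀ k, a k j = 0 := by simpa using hj
  exact hk (by simp [ha, ha'])

lemma exists_sub_eq_of_sparsity_le_two_mul {b : ℕ → Fin m → ℂ} {q : ℕ} (hb : sparsity b ≤ 2 * q)
    (hpers : Persistent b) :
    ∃ a a', a' - a = b ∧ Persistent a ∧ sparsity a ≤ q ∧ sparsity a' ≤ q := by
  obtain ⟨i, hi⟩ := persistent_iff_exists.1 hpers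
  have hib : i ∈ {j | ∃ k, b k j ≠ 0} := exists_ne_zero_of_not_tendsto hi
  have sparsity_pos : 0 < sparsity b := (Set.ncard_pos).2 ⟨i, hib⟩
  obtain ⟨s, his, -, hs, hs'⟩ := exists_subsuperset_ncard_le_ncard_sdiff_le (q := q) (q' := q)
    (Set.singleton_subset_iff.2 hib) (by rw [Set.ncard_singleton]; lia)
    (by rw [← two_mul]; exact hb) (Set.toFinite _)
  rw [Set.singleton_subset_iff] at his
  refine ⟨fun k ↦ s.indicator (-b k), fun k ↦ sᶜ.indicator (b k), ?_, ?_, ?_, ?_⟩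
  · ext1 k
    rw [Pi.sub_apply, Set.indicator_neg', sub_neg_eq_add, Set.indicator_compl_add_self]
  · refine persistent_iff_exists.2 ⟨i, fun h ↦ hi ?_⟩
    simpa [his] using h.neg
  · refine (sparsity_le_ncard fun j ⟨k, hk⟩ ↦ ?_).trans hs
    exact Set.mem_of_indicator_ne_zero hk
  · refine (sparsity_le_ncard fun j ⟨k, hk⟩ ↦ ?_).trans hs'
    exact ⟨⟨k, (Set.indicator_apply_ne_zero.1 hk).2⟩, Set.mem_of_indicator_ne_zero hk⟩

end Sparsity

section Output

variable {A Bd Ba C Dd Da}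

lemma traj_sub (a a' : ℕ → Fin m → ℂ) (d d' : ℕ → Fin o → ℂ) (x x' : Fin n → ℂ) (k : ℕ) :
    traj A Bd Ba (a' - a) (d' - d) (x' - x) k =
      traj A Bd Ba a' d' x' k - traj A Bd Ba a d x k := by
  induction k with
  | zero => rfl
  | succ k ih =>
    simp only [traj, ih, Pi.sub_apply, Matrix.mulVec_sub]
    abel

lemma output_sub (a a' : ℕ → Fin m → ℂ) (d d' : ℕ → Fin o → ℂ) (x x' : Fin n → ℂ) :
    output A Bd Ba C Dd Da (a' - a) (d' - d) (x' - x) =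
      output A Bd Ba C Dd Da a' d' x' - output A Bd Ba C Dd Da a d x := by
  ext1 k
  simp only [output, traj_sub, Pi.sub_apply, Matrix.mulVec_sub]
  abel

lemma traj_zero_zero (x : Fin n → ℂ) (k : ℕ) :
    traj A Bd Ba 0 0 x k = (A.toLin' ^ k) x := by
  induction k with
  | zero => rfl
  | succ k ih => simp [traj, ih, pow_succ']

lemma tendsto_output_zero_zero (hA : ∀ z ∈ spectrum ℂ A, ‖z‖ < 1) (x : Fin n → ℂ) :
    Tendsto (output A Bd Ba C Dd Da 0 0 x) atTop (𝓝 0) := by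
  have htraj : Tendsto (fun k ↦ (A.toLin' ^ k) x) atTop (𝓝 0) :=
    tendsto_pow_apply_of_forall_mem_spectrum (by rwa [Matrix.spectrum_toLin']) x
  have hcont : Continuous fun x : Fin n → ℂ ↦ C.mulVec x := by fun_prop
  have houtput : output A Bd Ba C Dd Da 0 0 x = fun k ↦ C.mulVec ((A.toLin' ^ k) x) := by
    ext1 k
    simp [output, traj_zero_zero]
  simpa only [houtput, Function.comp_def, Matrix.mulVec_zero] using (hcont.tendsto 0).comp htraj

lemma Undetectable.exists_tendsto_output (hA : ∀ z ∈ spectrum ℂ A, ‖z‖ < 1)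
    {a : ℕ → Fin m → ℂ} (ha : Undetectable A Bd Ba C Dd Da a) (x0 : Fin n → ℂ) :
    ∃ d, Tendsto (output A Bd Ba C Dd Da a d x0) atTop (𝓝 0) := by
  obtain ⟨d, z0, hz⟩ := ha
  refine ⟨d, ?_⟩
  have free_response :
      output A Bd Ba C Dd Da a d x0 = output A Bd Ba C Dd Da 0 0 (x0 - z0) := by
    have hz0 : output A Bd Ba C Dd Da a d z0 = 0 := funext hz
    rw [← sub_self a, ← sub_self d, output_sub, hz0, sub_zero]
  exact free_response ▸ tendsto_output_zero_zero hA (x0 - z0)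

lemma natCast_lt_iInf_secIndex_iff {N : ℕ} :
    (N : ℕ∞) < ⨅ i, secIndex A Bd Ba C Dd Da i ↔
      ∀ a, Persistent a → Undetectable A Bd Ba C Dd Da a → N < sparsity a := by
  constructor
  · intro h a hpers hund
    obtain ⟨i, hi⟩ := persistent_iff_exists.1 hpers
    have index_le : secIndex A Bd Ba C Dd Da i ≤ sparsity a :=
      sInf_le ⟨a, hpers, hund, exists_ne_zero_of_not_tendsto hi, rfl⟩
    exact_mod_cast h.trans_le ((iInf_le _ i).trans index_le)
  · intro h
    rw [← ENat.natCast_add_one_le_iff]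
    refine le_iInf fun i ↦ le_sInf ?_
    rintro _ ⟨a, hpers, hund, -, rfl⟩
    exact_mod_cast h a hpers hund

end Output

section Componentwise

variable {ι κ 𝕜 : Type*} [CommSemiring 𝕜]

/-- A linear operator on scalar signals, applied to each component of a vector signal. When it
commutes with the shift, it maps runs of a linear system to runs of the same system. -/
def componentwise (Φ : Module.End 𝕜 (ℕ → 𝕜)) : Module.End 𝕜 (ℕ → ι → 𝕜) where
  toFun x k j := Φ (fun t ↦ x t j) k
  map_add' x y := by
    ext k j
    exact congrFun (map_add Φ (fun t ↦ x t j) (fun t ↦ y t j)) k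
  map_smul' c x := by
    ext k j
    exact congrFun (map_smul Φ c (fun t ↦ x t j)) k

lemma componentwise_apply (Φ : Module.End 𝕜 (ℕ → 𝕜)) (x : ℕ → ι → 𝕜) (k : ℕ) (j : ι) :
    componentwise Φ x k j = Φ (fun t ↦ x t j) k := rfl

lemma componentwise_mulVec [Fintype ι] (Φ : Module.End 𝕜 (ℕ → 𝕜)) (G : Matrix κ ι 𝕜)
    (x : ℕ → ι → 𝕜) (k : ℕ) :
    componentwise Φ (fun t ↦ G.mulVec (x t)) k = G.mulVec (componentwise Φ x k) := by
  ext l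
  have row_eq : (fun t ↦ G.mulVec (x t) l) = ∑ j, G l j • fun t ↦ x t j := by
    ext t
    simp [Matrix.mulVec, dotProduct]
  rw [componentwise_apply, row_eq]
  simp [componentwise_apply, Matrix.mulVec, dotProduct]

lemma componentwise_shift {Φ : Module.End 𝕜 (ℕ → 𝕜)} (hΦ : Commute Φ (shift 𝕜 𝕜)) (x : ℕ → ι → 𝕜)
    (k : ℕ) : componentwise Φ x (k + 1) = componentwise Φ (fun t ↦ x (t + 1)) k := by
  ext j
  exact congrFun (LinearMap.congr_fun hΦ.eq.symm fun t ↦ x t j) k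

end Componentwise

section System

lemma sparsity_componentwise_le (Φ : Module.End ℂ (ℕ → ℂ)) (a : ℕ → Fin m → ℂ) :
    sparsity (componentwise Φ a) ≤ sparsity a := by
  refine sparsity_le_ncard fun j ⟨k, hk⟩ ↦ ?_
  by_contra! hj
  have aj : (fun t ↦ a t j) = 0 := by simpa [funext_iff] using hj
  exact hk (by simp [componentwise_apply, aj])

variable {A Bd Ba C Dd Da} {Φ : Module.End ℂ (ℕ → ℂ)}

lemma traj_componentwise (hΦ : Commute Φ (shift ℂ ℂ)) (a : ℕ → Fin m → ℂ) (d : ℕ → Fin o → ℂ)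
    (x0 : Fin n → ℂ) (k : ℕ) :
    traj A Bd Ba (componentwise Φ a) (componentwise Φ d)
        (componentwise Φ (traj A Bd Ba a d x0) 0) k =
      componentwise Φ (traj A Bd Ba a d x0) k := by
  induction k with
  | zero => rfl
  | succ k ih =>
    have step : (fun t ↦ traj A Bd Ba a d x0 (t + 1)) = (fun t ↦ A.mulVec (traj A Bd Ba a d x0 t)) +
        (fun t ↦ Bd.mulVec (d t)) + fun t ↦ Ba.mulVec (a t) := rfl
    rw [componentwise_shift hΦ, step, traj, ih]
    simp only [map_add, Pi.add_apply, componentwise_mulVec]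

lemma output_componentwise (hΦ : Commute Φ (shift ℂ ℂ)) (a : ℕ → Fin m → ℂ) (d : ℕ → Fin o → ℂ)
    (x0 : Fin n → ℂ) :
    output A Bd Ba C Dd Da (componentwise Φ a) (componentwise Φ d)
        (componentwise Φ (traj A Bd Ba a d x0) 0) =
      componentwise Φ (output A Bd Ba C Dd Da a d x0) := by
  have output_eq : output A Bd Ba C Dd Da a d x0 = (fun t ↦ C.mulVec (traj A Bd Ba a d x0 t)) +
      (fun t ↦ Dd.mulVec (d t)) + fun t ↦ Da.mulVec (a t) := rfl
  ext1 k
  rw [output_eq, output, traj_componentwise hΦ]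
  simp only [map_add, Pi.add_apply, componentwise_mulVec]

lemma exists_undetectable_of_tendsto_output {a : ℕ → Fin m → ℂ} {d : ℕ → Fin o → ℂ}
    {x0 : Fin n → ℂ} (ha : Persistent a)
    (hy : Tendsto (output A Bd Ba C Dd Da a d x0) atTop (𝓝 0)) :
    ∃ b, Persistent b ∧ Undetectable A Bd Ba C Dd Da b ∧ sparsity b ≤ sparsity a := by
  obtain ⟨i, hi⟩ := persistent_iff_exists.1 ha
  obtain ⟨Φ, hΦ, hΦ0, hΦi⟩ := exists_commute_shift_forall_eq_zero hi
  have hΦy : componentwise Φ (output A Bd Ba C Dd Da a d x0) = 0 := by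
    ext k l
    exact congrFun (hΦ0 _ (tendsto_pi_nhds.1 hy l)) k
  refine ⟨componentwise Φ a, persistent_iff_exists.2 ⟨i, hΦi⟩,
    ⟨componentwise Φ d, componentwise Φ (traj A Bd Ba a d x0) 0, fun k ↦ ?_⟩,
    sparsity_componentwise_le Φ a⟩
  rw [output_componentwise hΦ, hΦy, Pi.zero_apply]

end System

/-- with `A` Schur and a known, fixed initial state `x0`, every persistent
attack of sparsity at most `q` is asymptotically identifiable (asymptotically
`i`-identifiable for every `i`) iff `2q < min_i α_i`. -/
theorem asympIdentifiable_iff_two_mul_lt_min_secIndex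
    (hSchur : ∀ z ∈ spectrum ℂ A, ‖z‖ < 1) (x0 : Fin n → ℂ) (q : ℕ) :
    (∀ a : ℕ → Fin m → ℂ, Persistent a → sparsity a ≤ q →
      ∀ i : Fin m, ∀ a' : ℕ → Fin m → ℂ, sparsity a' ≤ q →
        ¬ Tendsto (fun k => a' k i - a k i) atTop (nhds 0) →
        ∀ d d' : ℕ → Fin o → ℂ,
          ¬ Tendsto (fun k => output A Bd Ba C Dd Da a' d' x0 k -
              output A Bd Ba C Dd Da a d x0 k) atTop (nhds 0)) ↔
    ((2 * q : ℕ) : ℕ∞) < ⨅ i : Fin m, secIndex A Bd Ba C Dd Da i := by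
  rw [natCast_lt_iInf_secIndex_iff]
  constructor
  · intro hident b hpers hund
    by_contra! hsparse
    obtain ⟨a, a', rfl, ha, haq, ha'q⟩ := exists_sub_eq_of_sparsity_le_two_mul hsparse hpers
    obtain ⟨i, hi⟩ := persistent_iff_exists.1 hpers
    obtain ⟨d, hd⟩ := hund.exists_tendsto_output hSchur 0
    rw [← sub_zero d, ← sub_self x0, output_sub] at hd
    exact hident a ha haq i a' ha'q hi 0 d hd
  · intro hindex a _ haq i a' ha'q hi d d' hy
    have hdiff : Tendsto (output A Bd Ba C Dd Da (a' - a) (d' - d) (x0 - x0)) atTop (nhds 0) := by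
      rwa [output_sub]
    obtain ⟨b, hpers, hund, hb⟩ :=
      exists_undetectable_of_tendsto_output (persistent_iff_exists.2 ⟨i, hi⟩) hdiff
    have hlt : 2 * q < sparsity b := hindex b hpers hund
    have hsub : sparsity (a' - a) ≤ sparsity a' + sparsity a := sparsity_sub_le a a'
    lia
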